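/- For every φ ∈ PPU(b)⁻ one has the b̃₀-orthogonal direct sum decomposition V[t,t⁻¹] = π⁻¹(Ω(φ)) ⊕ φ⁻¹(tV[t]), where π : V[t,t⁻¹] → V⊕ is the canonical projection; equivalently, π⁻¹(Ω(φ)) = φ⁻¹(V[t⁻¹]) and V[t,t⁻¹] = φ⁻¹(tV[t]) ⊕ φ⁻¹(V[t⁻¹]) b̃₀-orthogonally. -/

import Mathlib

open Finsupp

variable (k : Type*) [Field k] (V : Type*) [AddCommGroup V] [Module k V]

/-- Multiplication by `t^n` on `V[t,t⁻¹] := ℤ →₀ V` (writing `v = ∑ᵢ tⁱ vᵢ` as the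
finitely supported function `i ↦ vᵢ`). -/
noncomputable def shift (n : ℤ) : (ℤ →₀ V) ≃ₗ[k] (ℤ →₀ V) :=
  Finsupp.domLCongr (Equiv.addRight n)

/-- The coefficient of `tⁿ` of `b̃(v,w) = ∑ₙ tⁿ (∑ᵢ b(v_{i-n}, w_i))`. -/
noncomputable def Btilde (b : LinearMap.BilinForm k V) (n : ℤ) (v w : ℤ →₀ V) : k :=
  w.sum fun i wi => b (v (i - n)) wi

/-- `φ` is a paraunitary transformation: an invertible `k[t,t⁻¹]`-linear
(i.e. `k`-linear and commuting with multiplication by `t`) endomorphism of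
`V[t,t⁻¹]` preserving `b̃`. -/
def IsPU (b : LinearMap.BilinForm k V) (φ : (ℤ →₀ V) ≃ₗ[k] (ℤ →₀ V)) : Prop :=
  (∀ v, φ (shift k V 1 v) = shift k V 1 (φ v)) ∧
  ∀ (n : ℤ) (v w : ℤ →₀ V), Btilde k V b n (φ v) (φ w) = Btilde k V b n v w

/-- The specialization `t = 1` of a `k[t,t⁻¹]`-linear endomorphism `f = ∑ᵢ tⁱ fᵢ`
of `V[t,t⁻¹]`, i.e. the endomorphism `ε₁(f) = ∑ᵢ fᵢ` of `V`. -/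
noncomputable def eps (f : (ℤ →₀ V) →ₗ[k] (ℤ →₀ V)) : V →ₗ[k] V :=
  (Finsupp.lsum k fun _ : ℤ => (LinearMap.id : V →ₗ[k] V)) ∘ₗ f ∘ₗ Finsupp.lsingle 0

/-- `φ` is pure paraunitary: paraunitary and specializing to the identity at `t = 1`. -/
def IsPPU (b : LinearMap.BilinForm k V) (φ : (ℤ →₀ V) ≃ₗ[k] (ℤ →₀ V)) : Prop :=
  IsPU k V b φ ∧ eps k V (φ : (ℤ →₀ V) →ₗ[k] (ℤ →₀ V)) = LinearMap.id

/-- `φ ∈ PPU(b)⁻`: pure paraunitary and all Laurent coefficients `φᵢ` for `i > 0` vanish. -/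
def PPUneg (b : LinearMap.BilinForm k V) (φ : (ℤ →₀ V) ≃ₗ[k] (ℤ →₀ V)) : Prop :=
  IsPPU k V b φ ∧ ∀ (x : V) (i : ℤ), 0 < i → φ (Finsupp.single 0 x) i = 0

/-- `V[t⁻¹] ⊆ V[t,t⁻¹]`: the elements with `vᵢ = 0` for `i > 0`. -/
def Vneg : Submodule k (ℤ →₀ V) where
  carrier := {v | ∀ i : ℤ, 0 < i → v i = 0}
  add_mem' := by
    intro a c ha hc i hi
    simp only [Set.mem_setOf_eq] at *
    simp [Finsupp.add_apply, ha i hi, hc i hi]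
  zero_mem' := by intro i _; rfl
  smul_mem' := by
    intro c x hx i hi
    simp only [Set.mem_setOf_eq] at *
    simp [Finsupp.smul_apply, hx i hi]

/-- `tV[t] ⊆ V[t,t⁻¹]`: the elements with `vᵢ = 0` for `i ≤ 0`. -/
def Vpos1 : Submodule k (ℤ →₀ V) where
  carrier := {v | ∀ i : ℤ, i ≤ 0 → v i = 0}
  add_mem' := by
    intro a c ha hc i hi
    simp only [Set.mem_setOf_eq] at *
    simp [Finsupp.add_apply, ha i hi, hc i hi]
  zero_mem' := by intro i _; rfl
  smul_mem' := by
    intro c x hx i hi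
    simp only [Set.mem_setOf_eq] at *
    simp [Finsupp.smul_apply, hx i hi]

/-- The kernel `Ω(φ) ⊆ V⊕` of the endomorphism of `V⊕ = V[t,t⁻¹]/V[t⁻¹]` induced by `φ`. -/
noncomputable def OmegaSub (φ : (ℤ →₀ V) ≃ₗ[k] (ℤ →₀ V)) :
    Submodule k ((ℤ →₀ V) ⧸ Vneg k V) :=
  Submodule.map (Vneg k V).mkQ
    (Submodule.comap (φ : (ℤ →₀ V) →ₗ[k] (ℤ →₀ V)) (Vneg k V))

/-!
As a module over `k`, `V[t,t⁻¹]` is the `b̃₀`-orthogonal direct sum of `tV[t]` and `V[t⁻¹]`, because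
`b̃₀` only pairs coefficients of equal degree. A paraunitary `φ` is a `b̃₀`-isometric automorphism,
so it pulls this decomposition back to an orthogonal one. If moreover `φ` has no coefficients in
positive degree, it maps `V[t⁻¹]` into itself; hence `φ⁻¹(V[t⁻¹])` contains `V[t⁻¹] = ker π` and is
recovered from its image `Ω(φ)` under `π`.
-/

section

variable {k V}

theorem shift_apply (n : ℤ) (v : ℤ →₀ V) (j : ℤ) : shift k V n v j = v (j - n) := by
  simp [shift, sub_eq_add_neg]

theorem shift_single (n i : ℤ) (x : V) :
    shift k V n (Finsupp.single i x) = Finsupp.single (i + n) x := by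
  simp [shift]

theorem shift_zero (v : ℤ →₀ V) : shift k V 0 v = v := by
  ext j
  rw [shift_apply, sub_zero]

theorem shift_add (m n : ℤ) (v : ℤ →₀ V) :
    shift k V (m + n) v = shift k V m (shift k V n v) := by
  ext j
  simp only [shift_apply, sub_sub]

theorem map_shift_of_map_shift_one {f : (ℤ →₀ V) →ₗ[k] (ℤ →₀ V)}
    (hf : ∀ v, f (shift k V 1 v) = shift k V 1 (f v)) (n : ℤ) (v : ℤ →₀ V) :
    f (shift k V n v) = shift k V n (f v) := by
  induction n using Int.induction_on with
  | zero => rw [shift_zero, shift_zero]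
  | succ n ih => rw [add_comm, shift_add, hf, ih, shift_add]
  | pred n ih =>
    apply (shift k V 1).injective
    rw [← hf, ← shift_add, ← shift_add, add_sub_cancel, ih]

theorem map_apply_eq_sum_of_map_shift_one {f : (ℤ →₀ V) →ₗ[k] (ℤ →₀ V)}
    (hf : ∀ v, f (shift k V 1 v) = shift k V 1 (f v)) (v : ℤ →₀ V) (j : ℤ) :
    f v j = v.sum fun i x => f (Finsupp.single 0 x) (j - i) := by
  have map_single_apply (i : ℤ) (x : V) :
      f (Finsupp.single i x) j = f (Finsupp.single 0 x) (j - i) := by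
    rw [← shift_apply (k := k), ← map_shift_of_map_shift_one hf, shift_single, zero_add]
  conv_lhs => rw [← Finsupp.sum_single v]
  rw [map_finsuppSum, Finsupp.sum_apply]
  exact Finsupp.sum_congr fun i _ => map_single_apply i (v i)

theorem Vneg_le_comap_of_map_shift_one {f : (ℤ →₀ V) →ₗ[k] (ℤ →₀ V)}
    (hf : ∀ v, f (shift k V 1 v) = shift k V 1 (f v))
    (hneg : ∀ (x : V) (i : ℤ), 0 < i → f (Finsupp.single 0 x) i = 0) :
    Vneg k V ≤ (Vneg k V).comap f := by
  intro v hv j hj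
  rw [map_apply_eq_sum_of_map_shift_one hf]
  refine Finset.sum_eq_zero fun i hi => hneg _ _ ?_
  have hi_nonpos : i ≤ 0 := not_lt.mp fun hpos => Finsupp.mem_support_iff.mp hi (hv i hpos)
  omega

theorem comap_mkQ_OmegaSub {φ : (ℤ →₀ V) ≃ₗ[k] (ℤ →₀ V)}
    (hφ : Vneg k V ≤ (Vneg k V).comap (φ : (ℤ →₀ V) →ₗ[k] (ℤ →₀ V))) :
    (OmegaSub k V φ).comap (Vneg k V).mkQ =
      (Vneg k V).comap (φ : (ℤ →₀ V) →ₗ[k] (ℤ →₀ V)) := by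
  rw [OmegaSub, Submodule.comap_map_mkQ, sup_eq_right.mpr hφ]

variable (k V) in
theorem Vneg_eq_supported : Vneg k V = Finsupp.supported V k (Set.Iic 0) := by
  ext v
  simp [Vneg, Finsupp.mem_supported']

variable (k V) in
theorem Vpos1_eq_supported : Vpos1 k V = Finsupp.supported V k (Set.Ioi 0) := by
  ext v
  simp [Vpos1, Finsupp.mem_supported']

variable (k V) in
theorem isCompl_Vpos1_Vneg : IsCompl (Vpos1 k V) (Vneg k V) := by
  rw [Vpos1_eq_supported, Vneg_eq_supported, ← Set.compl_Ioi]
  exact ⟨Finsupp.disjoint_supported_supported disjoint_compl_right,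
    Finsupp.codisjoint_supported_supported isCompl_compl.codisjoint⟩

theorem Btilde_zero_eq_zero_of_disjoint_support (b : LinearMap.BilinForm k V) {v w : ℤ →₀ V}
    (hvw : Disjoint v.support w.support) : Btilde k V b 0 v w = 0 := by
  refine Finset.sum_eq_zero fun i hi => ?_
  have hvi : v i = 0 := Finsupp.notMem_support_iff.mp (Finset.disjoint_right.mp hvw hi)
  simp only [sub_zero, hvi, LinearMap.map_zero₂]

theorem Btilde_zero_eq_zero_of_mem_Vpos1_of_mem_Vneg (b : LinearMap.BilinForm k V)
    {v w : ℤ →₀ V} (hv : v ∈ Vpos1 k V) (hw : w ∈ Vneg k V) : Btilde k V b 0 v w = 0 := by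
  rw [Vpos1_eq_supported, Finsupp.mem_supported] at hv
  rw [Vneg_eq_supported, Finsupp.mem_supported] at hw
  have hdisj : Disjoint (Set.Ioi (0 : ℤ)) (Set.Iic 0) := (Set.Iic_disjoint_Ioi le_rfl).symm
  exact Btilde_zero_eq_zero_of_disjoint_support b (Finset.disjoint_coe.mp (hdisj.mono hv hw))

end

theorem stmt14_general (b : LinearMap.BilinForm k V)
    (φ : (ℤ →₀ V) ≃ₗ[k] (ℤ →₀ V)) (hφ : IsPU k V b φ)
    (hneg : ∀ (x : V) (i : ℤ), 0 < i → φ (Finsupp.single 0 x) i = 0) :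
    (Submodule.comap (Vneg k V).mkQ (OmegaSub k V φ) =
      Submodule.comap (φ : (ℤ →₀ V) →ₗ[k] (ℤ →₀ V)) (Vneg k V)) ∧
    (∀ x ∈ Submodule.comap (φ : (ℤ →₀ V) →ₗ[k] (ℤ →₀ V)) (Vpos1 k V),
      ∀ y ∈ Submodule.comap (φ : (ℤ →₀ V) →ₗ[k] (ℤ →₀ V)) (Vneg k V),
        Btilde k V b 0 x y = 0) ∧
    (Submodule.comap (φ : (ℤ →₀ V) →ₗ[k] (ℤ →₀ V)) (Vpos1 k V) ⊓
      Submodule.comap (φ : (ℤ →₀ V) →ₗ[k] (ℤ →₀ V)) (Vneg k V) = ⊥) ∧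
    (Submodule.comap (φ : (ℤ →₀ V) →ₗ[k] (ℤ →₀ V)) (Vpos1 k V) ⊔
      Submodule.comap (φ : (ℤ →₀ V) →ₗ[k] (ℤ →₀ V)) (Vneg k V) = ⊤) := by
  have hcompl := (Submodule.orderIsoMapComap φ).symm.isCompl (isCompl_Vpos1_Vneg k V)
  refine ⟨comap_mkQ_OmegaSub (Vneg_le_comap_of_map_shift_one hφ.1 hneg), fun x hx y hy => ?_,
    hcompl.inf_eq_bot, hcompl.sup_eq_top⟩
  rw [← hφ.2 0]
  exact Btilde_zero_eq_zero_of_mem_Vpos1_of_mem_Vneg b hx hy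

/-- For `φ ∈ PPU(b)⁻`: `π⁻¹(Ω(φ)) = φ⁻¹(V[t⁻¹])`, and
`V[t,t⁻¹] = φ⁻¹(tV[t]) ⊕ φ⁻¹(V[t⁻¹])` is a `b̃₀`-orthogonal direct sum. -/
theorem stmt14 [FiniteDimensional k V] (b : LinearMap.BilinForm k V)
    (hsymm : ∀ v w : V, b v w = b w v)
    (haniso : ∀ v : V, b v v = 0 → v = 0)
    (φ : (ℤ →₀ V) ≃ₗ[k] (ℤ →₀ V)) (hφ : PPUneg k V b φ) :
    (Submodule.comap (Vneg k V).mkQ (OmegaSub k V φ) =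
      Submodule.comap (φ : (ℤ →₀ V) →ₗ[k] (ℤ →₀ V)) (Vneg k V)) ∧
    (∀ x ∈ Submodule.comap (φ : (ℤ →₀ V) →ₗ[k] (ℤ →₀ V)) (Vpos1 k V),
      ∀ y ∈ Submodule.comap (φ : (ℤ →₀ V) →ₗ[k] (ℤ →₀ V)) (Vneg k V),
        Btilde k V b 0 x y = 0) ∧
    (Submodule.comap (φ : (ℤ →₀ V) →ₗ[k] (ℤ →₀ V)) (Vpos1 k V) ⊓
      Submodule.comap (φ : (ℤ →₀ V) →ₗ[k] (ℤ →₀ V)) (Vneg k V) = ⊥) ∧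
    (Submodule.comap (φ : (ℤ →₀ V) →ₗ[k] (ℤ →₀ V)) (Vpos1 k V) ⊔
      Submodule.comap (φ : (ℤ →₀ V) →ₗ[k] (ℤ →₀ V)) (Vneg k V) = ⊤) :=
  stmt14_general k V b φ hφ.1.1 hφ.2
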